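/- Let |ψ⟩ = |φ⟩_A ⊗ |χ⟩_{BC} be a three-qubit pure state that is a product of a qubit state |φ⟩_A and a two-qubit state |χ⟩_{BC} across the bipartition A|BC. Then for every choice of Hermitian qubit observables X₀, X₁ (Alice) and Y₀, Y₁ (Bob) with eigenvalues ±1 such that the four conditioning events in CP (with Z₀ = σx, Z₁ = σy) have positive probability, one has CP < 4; i.e., no such state can attain the algebraic maximum CP = 4. -/

import Mathlib

open Matrix Complex
open scoped Matrix Kronecker ComplexOrder

noncomputable section
namespace Paper

/-- Pauli X. -/
def sx : Matrix (Fin 2) (Fin 2) ℂ := !![0, 1; 1, 0]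
/-- Pauli Y. -/
def sy : Matrix (Fin 2) (Fin 2) ℂ := !![0, -Complex.I; Complex.I, 0]
/-- Pauli Z. -/
def sz : Matrix (Fin 2) (Fin 2) ℂ := !![1, 0; 0, -1]

/-- Projector onto outcome `a ∈ {0,1}` of a dichotomic observable `O`:
`Π₀ = (I+O)/2`, `Π₁ = (I−O)/2`. -/
def Proj {d : ℕ} (a : Fin 2) (O : Matrix (Fin d) (Fin d) ℂ) : Matrix (Fin d) (Fin d) ℂ :=
  (2 : ℂ)⁻¹ • (1 + if a = 0 then O else -O)

/-- Outer product `|ψ⟩⟨ψ|`. -/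
def outer {n : Type*} (ψ : n → ℂ) : Matrix n n ℂ :=
  Matrix.of fun i j => ψ i * star (ψ j)

/-- `ψ` is a unit vector. -/
def UnitVec {n : Type*} [Fintype n] (ψ : n → ℂ) : Prop := ∑ i, star (ψ i) * ψ i = 1

/-- Hermitian observable with eigenvalues `±1`. -/
def Dichotomic {d : ℕ} (O : Matrix (Fin d) (Fin d) ℂ) : Prop := O.IsHermitian ∧ O * O = 1

/-- Partial trace over the first two tensor factors. -/
def trAB {dA dB : ℕ} (M : Matrix (Fin dA × Fin dB × Fin 2) (Fin dA × Fin dB × Fin 2) ℂ) :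
    Matrix (Fin 2) (Fin 2) ℂ :=
  Matrix.of fun i j => ∑ k : Fin dA, ∑ l : Fin dB, M (k, l, i) (k, l, j)

/-- Unnormalized conditional state on Charlie's qubit:
`σ^C_{a,b|X,Y} = Tr_{AB}[(Π_{a|X} ⊗ Π_{b|Y} ⊗ I₂) ρ]`. -/
def condState {dA dB : ℕ} (ρ : Matrix (Fin dA × Fin dB × Fin 2) (Fin dA × Fin dB × Fin 2) ℂ)
    (X : Matrix (Fin dA) (Fin dA) ℂ) (Y : Matrix (Fin dB) (Fin dB) ℂ) (a b : Fin 2) :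
    Matrix (Fin 2) (Fin 2) ℂ :=
  trAB ((Proj a X ⊗ₖ (Proj b Y ⊗ₖ (1 : Matrix (Fin 2) (Fin 2) ℂ))) * ρ)

/-- Conditional probability `P(c_Z | ·) = Tr[Π_{c|Z} σ] / Tr[σ]`. -/
def condProb (Z σ : Matrix (Fin 2) (Fin 2) ℂ) (c : Fin 2) : ℝ :=
  ((Proj c Z * σ).trace).re / (σ.trace).re

/-- The fine-grained steering expression
`CP = P(0_{Z₀}|1_{X₀}1_{Y₀}) + P(0_{Z₀}|0_{X₁}1_{Y₁}) + P(0_{Z₁}|0_{X₀}1_{Y₁}) + P(0_{Z₁}|0_{X₁}1_{Y₀})`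
with `Z₀ = σx`, `Z₁ = σy`. -/
def CP {dA dB : ℕ} (ρ : Matrix (Fin dA × Fin dB × Fin 2) (Fin dA × Fin dB × Fin 2) ℂ)
    (X0 X1 : Matrix (Fin dA) (Fin dA) ℂ) (Y0 Y1 : Matrix (Fin dB) (Fin dB) ℂ) : ℝ :=
  condProb sx (condState ρ X0 Y0 1 1) 0 + condProb sx (condState ρ X1 Y1 0 1) 0 +
  condProb sy (condState ρ X0 Y1 0 1) 0 + condProb sy (condState ρ X1 Y0 0 1) 0

/-- The four conditioning events in `CP` have positive probability. -/
def PosEvents {dA dB : ℕ} (ρ : Matrix (Fin dA × Fin dB × Fin 2) (Fin dA × Fin dB × Fin 2) ℂ)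
    (X0 X1 : Matrix (Fin dA) (Fin dA) ℂ) (Y0 Y1 : Matrix (Fin dB) (Fin dB) ℂ) : Prop :=
  0 < ((condState ρ X0 Y0 1 1).trace).re ∧ 0 < ((condState ρ X1 Y1 0 1).trace).re ∧
  0 < ((condState ρ X0 Y1 0 1).trace).re ∧ 0 < ((condState ρ X1 Y0 0 1).trace).re

/-- Product across the bipartition `A|BC`. -/
def BisepA {dA dB : ℕ} (ψ : Fin dA × Fin dB × Fin 2 → ℂ) : Prop :=
  ∃ (u : Fin dA → ℂ) (v : Fin dB × Fin 2 → ℂ), ∀ i j k, ψ (i, j, k) = u i * v (j, k)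

/-- Product across the bipartition `B|AC`. -/
def BisepB {dA dB : ℕ} (ψ : Fin dA × Fin dB × Fin 2 → ℂ) : Prop :=
  ∃ (u : Fin dB → ℂ) (v : Fin dA × Fin 2 → ℂ), ∀ i j k, ψ (i, j, k) = u j * v (i, k)

/-- Product across the bipartition `C|AB`. -/
def BisepC {dA dB : ℕ} (ψ : Fin dA × Fin dB × Fin 2 → ℂ) : Prop :=
  ∃ (u : Fin 2 → ℂ) (v : Fin dA × Fin dB → ℂ), ∀ i j k, ψ (i, j, k) = v (i, j) * u k

/-- Genuine multipartite entanglement: not a product across any bipartition. -/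
def GenEnt {dA dB : ℕ} (ψ : Fin dA × Fin dB × Fin 2 → ℂ) : Prop :=
  ¬ BisepA ψ ∧ ¬ BisepB ψ ∧ ¬ BisepC ψ

/-!
Across a product cut `A|BC`, Alice's measurement only rescales Charlie's conditional state, so
Charlie's normalized state depends on Bob's outcome alone. Grouping the four terms of `CP` by Bob's
setting leaves, for each setting, the sum of the probabilities of outcome `0` for `σx` and `σy` in a
single state. As `σx` and `σy` anticommute, `(σx + σy) / √2` squares to `1`, so this sum is at most
`1 + √2 / 2`, and `CP ≤ 2 + √2 < 4`.
-/

section PosSemidef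

variable {𝕜 n : Type*} [RCLike 𝕜] [Fintype n]

open scoped MatrixOrder in
lemma trace_mul_nonneg_of_posSemidef {M N : Matrix n n 𝕜} (hM : M.PosSemidef)
    (hN : N.PosSemidef) : 0 ≤ (M * N).trace := by
  classical
  obtain ⟨B, rfl⟩ := CStarAlgebra.nonneg_iff_eq_star_mul_self.1 hM.nonneg
  rw [Matrix.mul_assoc, trace_mul_comm]
  exact (hN.mul_mul_conjTranspose_same B).trace_nonneg

lemma im_trace_mul_eq_zero_of_isHermitian {M N : Matrix n n ℂ} (hM : M.IsHermitian)
    (hN : N.IsHermitian) : (M * N).trace.im = 0 := by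
  rw [← Complex.conj_eq_iff_im, starRingEnd_apply, ← trace_conjTranspose, conjTranspose_mul,
    hM.eq, hN.eq, trace_mul_comm]

lemma re_pos_of_re_trace_smul_pos {M : Matrix n n ℂ} (hM : M.PosSemidef) {α : ℂ}
    (h : 0 < (α • M).trace.re) : 0 < α.re ∧ 0 < M.trace.re := by
  obtain ⟨trace_re, trace_im⟩ := Complex.nonneg_iff.1 hM.trace_nonneg
  rw [trace_smul, smul_eq_mul, Complex.mul_re, ← trace_im, mul_zero, sub_zero] at h
  exact ⟨pos_of_mul_pos_left h trace_re, trace_re.lt_of_ne' (right_ne_zero_of_mul h.ne')⟩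

end PosSemidef

section PartialTrace

variable {R m n : Type*} [Fintype m]

/-- The partial trace over the first factor of a bipartite matrix, encoded as the sum of the
diagonal blocks. -/
def partialTraceLeft [AddCommMonoid R] (M : Matrix (m × n) (m × n) R) : Matrix n n R :=
  ∑ k, M.submatrix (Prod.mk k) (Prod.mk k)

lemma partialTraceLeft_apply [AddCommMonoid R] (M : Matrix (m × n) (m × n) R) (i j : n) :
    partialTraceLeft M i j = ∑ k, M (k, i) (k, j) := by
  simp only [partialTraceLeft, Matrix.sum_apply, submatrix_apply]

lemma partialTraceLeft_posSemidef {𝕜 : Type*} [RCLike 𝕜] {M : Matrix (m × n) (m × n) 𝕜}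
    (hM : M.PosSemidef) : (partialTraceLeft M).PosSemidef :=
  posSemidef_sum _ fun k _ => hM.submatrix (Prod.mk k)

lemma partialTraceLeft_kronecker_one_mul_comm [CommSemiring R] [Fintype n] [DecidableEq n]
    (A : Matrix m m R) (M : Matrix (m × n) (m × n) R) :
    partialTraceLeft ((A ⊗ₖ (1 : Matrix n n R)) * M) =
      partialTraceLeft (M * (A ⊗ₖ (1 : Matrix n n R))) := by
  ext i j
  simp only [partialTraceLeft_apply, mul_apply, Fintype.sum_prod_type, kronecker_apply, one_apply,
    mul_ite, ite_mul, mul_one, mul_zero, zero_mul, Finset.sum_ite_eq, Finset.sum_ite_eq',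
    Finset.mem_univ, if_true]
  rw [Finset.sum_comm]
  simp only [mul_comm]

/-- The unnormalized state that the effect `E` on the first factor steers the second factor to,
`Tr₁[(E ⊗ I) ρ]`. -/
def steeredState [Semiring R] [Fintype n] [DecidableEq n] (E : Matrix m m R)
    (ρ : Matrix (m × n) (m × n) R) : Matrix n n R :=
  partialTraceLeft ((E ⊗ₖ (1 : Matrix n n R)) * ρ)

open scoped MatrixOrder in
lemma steeredState_posSemidef {𝕜 : Type*} [RCLike 𝕜] [Fintype n] [DecidableEq n]
    {E : Matrix m m 𝕜} {ρ : Matrix (m × n) (m × n) 𝕜} (hE : E.PosSemidef) (hρ : ρ.PosSemidef) :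
    (steeredState E ρ).PosSemidef := by
  classical
  obtain ⟨B, rfl⟩ := CStarAlgebra.nonneg_iff_eq_star_mul_self.1 hE.nonneg
  rw [star_eq_conjTranspose]
  have hsplit : (Bᴴ * B) ⊗ₖ (1 : Matrix n n 𝕜) = (B ⊗ₖ 1)ᴴ * (B ⊗ₖ 1) := by
    rw [conjTranspose_kronecker, conjTranspose_one, ← mul_kronecker_mul, Matrix.one_mul]
  have hcycle : steeredState (Bᴴ * B) ρ =
      partialTraceLeft ((B ⊗ₖ (1 : Matrix n n 𝕜)) * ρ * (B ⊗ₖ (1 : Matrix n n 𝕜))ᴴ) := by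
    rw [steeredState, hsplit, Matrix.mul_assoc, conjTranspose_kronecker, conjTranspose_one,
      partialTraceLeft_kronecker_one_mul_comm]
  rw [hcycle]
  exact partialTraceLeft_posSemidef (hρ.mul_mul_conjTranspose_same _)

end PartialTrace

section Dichotomic

variable {d : ℕ} {O Z W : Matrix (Fin d) (Fin d) ℂ}

lemma proj_zero (O : Matrix (Fin d) (Fin d) ℂ) : Proj 0 O = (2 : ℂ)⁻¹ • (1 + O) := rfl

lemma proj_one (O : Matrix (Fin d) (Fin d) ℂ) : Proj 1 O = (2 : ℂ)⁻¹ • (1 - O) := by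
  simp [Proj, sub_eq_add_neg]

lemma proj_isHermitian (hO : O.IsHermitian) (a : Fin 2) : (Proj a O).IsHermitian := by
  have half_isSelfAdjoint : IsSelfAdjoint (2 : ℂ)⁻¹ := by simp [isSelfAdjoint_iff]
  fin_cases a
  · exact (isHermitian_one.add hO).smul half_isSelfAdjoint
  · exact (isHermitian_one.add hO.neg).smul half_isSelfAdjoint

lemma proj_mul_self (hO : O * O = 1) (a : Fin 2) : Proj a O * Proj a O = Proj a O := by
  fin_cases a
  all_goals
    simp only [Fin.zero_eta, Fin.mk_one, proj_zero, proj_one, smul_mul_assoc, mul_smul_comm,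
      mul_add, add_mul, mul_sub, sub_mul, hO, mul_one, one_mul]
    module

lemma Dichotomic.proj_posSemidef (hO : Dichotomic O) (a : Fin 2) : (Proj a O).PosSemidef := by
  rw [← proj_mul_self hO.2 a]
  nth_rw 1 [← (proj_isHermitian hO.1 a).eq]
  exact posSemidef_conjTranspose_mul_self _

lemma Dichotomic.smul_add_smul (hZ : Dichotomic Z) (hW : Dichotomic W)
    (hZW : Z * W + W * Z = 0) {s t : ℝ} (hst : s ^ 2 + t ^ 2 = 1) :
    Dichotomic (s • Z + t • W) := by
  refine ⟨(hZ.1.smul (.all s)).add (hW.1.smul (.all t)), ?_⟩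
  calc (s • Z + t • W) * (s • Z + t • W)
      = s ^ 2 • (Z * Z) + t ^ 2 • (W * W) + (s * t) • (Z * W + W * Z) := by
        simp only [mul_add, add_mul, smul_mul_assoc, mul_smul_comm]
        module
    _ = 1 := by rw [hZ.2, hW.2, hZW, smul_zero, add_zero, ← add_smul, hst, one_smul]

lemma proj_zero_add_proj_zero (Z W : Matrix (Fin d) (Fin d) ℂ) :
    Proj 0 Z + Proj 0 W =
      (1 + √2 / 2) • (1 : Matrix (Fin d) (Fin d) ℂ) -
        √2 • Proj 1 ((√2 / 2) • Z + (√2 / 2) • W) := by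
  have half_smul (M : Matrix (Fin d) (Fin d) ℂ) : (2 : ℂ)⁻¹ • M = (2 : ℝ)⁻¹ • M := by
    rw [← Complex.coe_smul]; norm_num
  have sqrt_two_mul_self : √2 * √2 = 2 := Real.mul_self_sqrt zero_le_two
  simp only [proj_zero, proj_one, half_smul]
  match_scalars <;> linarith

lemma re_trace_proj_zero_add_le (hZ : Dichotomic Z) (hW : Dichotomic W)
    (hZW : Z * W + W * Z = 0) {τ : Matrix (Fin d) (Fin d) ℂ} (hτ : τ.PosSemidef) :
    (Proj 0 Z * τ).trace.re + (Proj 0 W * τ).trace.re ≤ (1 + √2 / 2) * τ.trace.re := by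
  set N := (√2 / 2) • Z + (√2 / 2) • W
  have hN : Dichotomic N := hZ.smul_add_smul hW hZW (by rw [div_pow, Real.sq_sqrt] <;> norm_num)
  have trace_nonneg : 0 ≤ (Proj 1 N * τ).trace.re :=
    (Complex.nonneg_iff.1 (trace_mul_nonneg_of_posSemidef (hN.proj_posSemidef 1) hτ)).1
  calc (Proj 0 Z * τ).trace.re + (Proj 0 W * τ).trace.re
      = (1 + √2 / 2) * τ.trace.re - √2 * (Proj 1 N * τ).trace.re := by
        rw [← Complex.add_re, ← trace_add, ← Matrix.add_mul, proj_zero_add_proj_zero]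
        simp only [Matrix.sub_mul, smul_mul_assoc, Matrix.one_mul, trace_sub, trace_smul,
          Complex.sub_re, Complex.smul_re, smul_eq_mul, N]
    _ ≤ (1 + √2 / 2) * τ.trace.re :=
        sub_le_self _ (mul_nonneg (Real.sqrt_nonneg 2) trace_nonneg)

end Dichotomic

section Pauli

lemma sx_dichotomic : Dichotomic sx := by
  constructor
  · ext i j; fin_cases i <;> fin_cases j <;> simp [sx]
  · simp [sx, one_fin_two]

lemma sy_dichotomic : Dichotomic sy := by
  constructor
  · ext i j; fin_cases i <;> fin_cases j <;> simp [sy]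
  · simp [sy, one_fin_two]

lemma sx_mul_sy_add_sy_mul_sx : sx * sy + sy * sx = 0 := by
  ext i j; fin_cases i <;> fin_cases j <;> simp [sx, sy]

end Pauli

section ConditionalProbability

variable {Z W τ : Matrix (Fin 2) (Fin 2) ℂ}

-- Both traces in `condProb Z τ c` are real, so a complex weight `α` enters only through `α.re`.
lemma condProb_smul (hZ : Z.IsHermitian) (hτ : τ.IsHermitian) {α : ℂ} (hα : α.re ≠ 0)
    (c : Fin 2) : condProb Z (α • τ) c = condProb Z τ c := by
  have trace_im : τ.trace.im = 0 := by
    simpa only [Matrix.one_mul] using im_trace_mul_eq_zero_of_isHermitian isHermitian_one hτ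
  have proj_trace_im : (Proj c Z * τ).trace.im = 0 :=
    im_trace_mul_eq_zero_of_isHermitian (proj_isHermitian hZ c) hτ
  simp only [condProb, mul_smul_comm, trace_smul, smul_eq_mul, Complex.mul_re, trace_im,
    proj_trace_im, mul_zero, sub_zero]
  exact mul_div_mul_left _ _ hα

lemma condProb_add_condProb_le (hZ : Dichotomic Z) (hW : Dichotomic W)
    (hZW : Z * W + W * Z = 0) (hτ : τ.PosSemidef) (htr : 0 < τ.trace.re) :
    condProb Z τ 0 + condProb W τ 0 ≤ 1 + √2 / 2 := by
  rw [condProb, condProb, ← add_div, div_le_iff₀ htr]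
  exact re_trace_proj_zero_add_le hZ hW hZW hτ

end ConditionalProbability

section ProductState

variable {dA dB : ℕ}

lemma trAB_kronecker (M : Matrix (Fin dA) (Fin dA) ℂ)
    (N : Matrix (Fin dB × Fin 2) (Fin dB × Fin 2) ℂ) :
    trAB (M ⊗ₖ N) = M.trace • partialTraceLeft N := by
  ext i j
  simp only [trAB, of_apply, kronecker_apply, Matrix.smul_apply, partialTraceLeft_apply,
    Matrix.trace, diag_apply, smul_eq_mul, Finset.sum_mul_sum]

lemma condState_kronecker (ρA : Matrix (Fin dA) (Fin dA) ℂ)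
    (ρBC : Matrix (Fin dB × Fin 2) (Fin dB × Fin 2) ℂ) (X : Matrix (Fin dA) (Fin dA) ℂ)
    (Y : Matrix (Fin dB) (Fin dB) ℂ) (a b : Fin 2) :
    condState (ρA ⊗ₖ ρBC) X Y a b = (Proj a X * ρA).trace • steeredState (Proj b Y) ρBC := by
  rw [condState, ← mul_kronecker_mul, trAB_kronecker, steeredState]

variable {ρA : Matrix (Fin dA) (Fin dA) ℂ} {ρBC : Matrix (Fin dB × Fin 2) (Fin dB × Fin 2) ℂ}

lemma condProb_condState_add_le {Z W : Matrix (Fin 2) (Fin 2) ℂ} (hZ : Dichotomic Z)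
    (hW : Dichotomic W) (hZW : Z * W + W * Z = 0) (hρBC : ρBC.PosSemidef)
    {X X' : Matrix (Fin dA) (Fin dA) ℂ} {Y : Matrix (Fin dB) (Fin dB) ℂ} {a a' b : Fin 2}
    (hY : (Proj b Y).PosSemidef) (hX : 0 < (condState (ρA ⊗ₖ ρBC) X Y a b).trace.re)
    (hX' : 0 < (condState (ρA ⊗ₖ ρBC) X' Y a' b).trace.re) :
    condProb Z (condState (ρA ⊗ₖ ρBC) X Y a b) 0 +
      condProb W (condState (ρA ⊗ₖ ρBC) X' Y a' b) 0 ≤ 1 + √2 / 2 := by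
  have hτ : (steeredState (Proj b Y) ρBC).PosSemidef := steeredState_posSemidef hY hρBC
  rw [condState_kronecker] at hX hX' ⊢
  obtain ⟨weight_pos, trace_pos⟩ := re_pos_of_re_trace_smul_pos hτ hX
  obtain ⟨weight_pos', -⟩ := re_pos_of_re_trace_smul_pos hτ hX'
  rw [condState_kronecker, condProb_smul hZ.1 hτ.isHermitian weight_pos.ne',
    condProb_smul hW.1 hτ.isHermitian weight_pos'.ne']
  exact condProb_add_condProb_le hZ hW hZW hτ trace_pos

end ProductState

section Outer

variable {m n : Type*}

lemma outer_posSemidef [Finite n] (ψ : n → ℂ) : (outer ψ).PosSemidef :=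
  posSemidef_vecMulVec_self_star ψ

lemma outer_mul_eq_kronecker (u : m → ℂ) (v : n → ℂ) :
    outer (fun i : m × n => u i.1 * v i.2) = outer u ⊗ₖ outer v := by
  ext i j
  simp only [outer, of_apply, kroneckerMap_apply, star_mul']
  exact mul_mul_mul_comm _ _ _ _

end Outer

theorem stmt14_general {dA dB : ℕ} (ρA : Matrix (Fin dA) (Fin dA) ℂ)
    {ρBC : Matrix (Fin dB × Fin 2) (Fin dB × Fin 2) ℂ} (hρBC : ρBC.PosSemidef)
    {X0 X1 : Matrix (Fin dA) (Fin dA) ℂ} {Y0 Y1 : Matrix (Fin dB) (Fin dB) ℂ}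
    (hY0 : (Proj 1 Y0).PosSemidef) (hY1 : (Proj 1 Y1).PosSemidef)
    (hpos : PosEvents (ρA ⊗ₖ ρBC) X0 X1 Y0 Y1) :
    CP (ρA ⊗ₖ ρBC) X0 X1 Y0 Y1 ≤ 2 + √2 := by
  obtain ⟨h00, h11, h01, h10⟩ := hpos
  have bob_Y0 := condProb_condState_add_le sx_dichotomic sy_dichotomic sx_mul_sy_add_sy_mul_sx
    hρBC hY0 h00 h10
  have bob_Y1 := condProb_condState_add_le sx_dichotomic sy_dichotomic sx_mul_sy_add_sy_mul_sx
    hρBC hY1 h11 h01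
  rw [CP]
  linarith

/-- no three-qubit pure state that is a product across the bipartition `A|BC`
can attain the algebraic maximum `CP = 4`. -/
theorem stmt14 (φA : Fin 2 → ℂ) (χ : Fin 2 × Fin 2 → ℂ)
    (hφ : UnitVec φA) (hχ : UnitVec χ)
    (X0 X1 Y0 Y1 : Matrix (Fin 2) (Fin 2) ℂ)
    (hX0 : Dichotomic X0) (hX1 : Dichotomic X1) (hY0 : Dichotomic Y0) (hY1 : Dichotomic Y1)
    (hpos : PosEvents (outer fun i : Fin 2 × Fin 2 × Fin 2 => φA i.1 * χ i.2) X0 X1 Y0 Y1) :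
    CP (outer fun i : Fin 2 × Fin 2 × Fin 2 => φA i.1 * χ i.2) X0 X1 Y0 Y1 < 4 := by
  rw [outer_mul_eq_kronecker] at hpos ⊢
  exact (stmt14_general _ (outer_posSemidef χ) (hY0.proj_posSemidef 1) (hY1.proj_posSemidef 1)
    hpos).trans_lt (by linarith [Real.sqrt_two_lt_three_halves])

end Paper
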